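/- A power series F in k((X^{-1})), not rational, is badly approximable (i.e., inf over nonzero q in k[X] of |q| ||qF|| > 0) if and only if the degrees of its partial quotients a_n are uniformly bounded. -/

import Mathlib

open Polynomial Filter

noncomputable section
open scoped Classical

namespace Littlewood

variable (k : Type*) [Field k]

/-- The element `X` of `k((X⁻¹))`: the inverse of the Laurent-series variable `t = X⁻¹`. -/
def XLS : LaurentSeries k := (HahnSeries.single (1 : ℤ) (1 : k))⁻¹

variable {k}

/-- Embedding of `k[X]` into `k((X⁻¹))`, sending the polynomial variable to `X`. -/
def emb (p : Polynomial k) : LaurentSeries k := Polynomial.aeval (XLS k) p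

/-- The degree of a Laurent series in `X⁻¹`: if `F = ∑_{h ≥ -m} f_h X^{-h}` with
`f_{-m} ≠ 0` then `deg F = m`. -/
def deg (F : LaurentSeries k) : ℤ := -F.order

/-- The norm `|F| = 2 ^ deg F`, with `|0| = 0`. -/
def lnorm (F : LaurentSeries k) : ℝ := if F = 0 then 0 else (2 : ℝ) ^ (deg F)

/-- Fractional part: the part of the series comprising only negative powers of `X`. -/
def frac (F : LaurentSeries k) : LaurentSeries k where
  coeff n := if 1 ≤ n then F.coeff n else 0
  isPWO_support' := F.isPWO_support'.mono (fun n hn => by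
    simp only [Function.mem_support] at hn ⊢
    intro h
    exact hn (by simp [h]))

/-- `‖F‖`: the norm of the fractional part of `F`. -/
def fnorm (F : LaurentSeries k) : ℝ := lnorm (frac F)

/-- `F` is a rational function. -/
def IsRat (F : LaurentSeries k) : Prop :=
  ∃ p q : Polynomial k, q ≠ 0 ∧ F * emb q = emb p

/-- The polynomial part of a Laurent series (the part with nonnegative powers of `X`). -/
def polyPart (F : LaurentSeries k) : Polynomial k :=
  ∑ i ∈ Finset.range ((-F.order).toNat + 1), Polynomial.C (F.coeff (-(i : ℤ))) * Polynomial.X ^ i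

/-- The complete quotients of the continued fraction algorithm applied to `F`. -/
def cfRem (F : LaurentSeries k) : ℕ → LaurentSeries k
  | 0 => F
  | n + 1 => (cfRem F n - emb (polyPart (cfRem F n)))⁻¹

/-- The partial quotients of the continued fraction expansion of `F`. -/
def pq (F : LaurentSeries k) (n : ℕ) : Polynomial k := polyPart (cfRem F n)

/-- Denominators `q_n` of the convergents of the continued fraction with
partial quotients `a`. -/
def den (a : ℕ → Polynomial k) : ℕ → Polynomial k
  | 0 => 1
  | 1 => a 1
  | n + 2 => a (n + 2) * den a (n + 1) + den a n

/-- Numerators `p_n` of the convergents. -/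
def num (a : ℕ → Polynomial k) : ℕ → Polynomial k
  | 0 => a 0
  | 1 => a 1 * a 0 + 1
  | n + 2 => a (n + 2) * num a (n + 1) + num a n

/-- The value of a finite continued fraction `[b_0, b_1, …, b_m]` over `k[X]`. -/
def finCF : List (Polynomial k) → LaurentSeries k
  | [] => 0
  | [b] => emb b
  | b :: l => emb b + (finCF l)⁻¹

/-- `F` is badly approximable. -/
def Bad (F : LaurentSeries k) : Prop :=
  ∃ c : ℝ, 0 < c ∧ ∀ q : Polynomial k, q ≠ 0 → c ≤ lnorm (emb q) * fnorm (emb q * F)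

lemma emb_mul (p q : Polynomial k) : emb (p * q) = emb p * emb q := map_mul _ p q

lemma emb_add (p q : Polynomial k) : emb (p + q) = emb p + emb q := map_add _ p q

lemma emb_sub (p q : Polynomial k) : emb (p - q) = emb p - emb q := map_sub _ p q

lemma emb_one : emb (1 : Polynomial k) = 1 := map_one (Polynomial.aeval (XLS k))

lemma emb_zero : emb (0 : Polynomial k) = 0 := map_zero (Polynomial.aeval (XLS k))

lemma XLS_pow (n : ℕ) : XLS k ^ n = HahnSeries.single (-(n : ℤ)) (1 : k) := by
  rw [XLS, HahnSeries.inv_single, HahnSeries.single_pow]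
  simp

lemma emb_monomial (n : ℕ) (a : k) :
    emb (Polynomial.monomial n a) = HahnSeries.single (-(n : ℤ)) a := by
  rw [emb, Polynomial.aeval_monomial, XLS_pow, HahnSeries.algebraMap_apply',
    PowerSeries.algebraMap_apply, Algebra.algebraMap_self, RingHom.id_apply,
    HahnSeries.ofPowerSeries_C, HahnSeries.C_apply, HahnSeries.single_mul_single]
  simp

lemma coeff_emb_neg (p : Polynomial k) (n : ℕ) : (emb p).coeff (-(n : ℤ)) = p.coeff n := by
  induction p using Polynomial.induction_on' with
  | add p q hp hq => rw [emb_add, HahnSeries.coeff_add, hp, hq, Polynomial.coeff_add]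
  | monomial m a =>
    rw [emb_monomial, HahnSeries.coeff_single, Polynomial.coeff_monomial]
    simp [eq_comm]

lemma coeff_emb_of_pos (p : Polynomial k) {n : ℤ} (hn : 0 < n) : (emb p).coeff n = 0 := by
  induction p using Polynomial.induction_on' with
  | add p q hp hq => rw [emb_add, HahnSeries.coeff_add, hp, hq, add_zero]
  | monomial m a =>
    rw [emb_monomial, HahnSeries.coeff_single, if_neg (by omega)]

lemma emb_eq_zero_iff {p : Polynomial k} : emb p = 0 ↔ p = 0 := by
  refine ⟨fun h => ?_, fun h => h ▸ emb_zero⟩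
  ext n
  rw [← coeff_emb_neg, h]
  simp

lemma coeff_polyPart (F : LaurentSeries k) (n : ℕ) :
    (polyPart F).coeff n = F.coeff (-(n : ℤ)) := by
  simp only [polyPart, Polynomial.finsetSum_coeff, Polynomial.coeff_C_mul, Polynomial.coeff_X_pow,
    mul_ite, mul_one, mul_zero, Finset.sum_ite_eq, Finset.mem_range]
  split_ifs with h
  · rfl
  · exact (HahnSeries.coeff_eq_zero_of_lt_order (by omega)).symm

lemma emb_polyPart_add_frac (F : LaurentSeries k) : emb (polyPart F) + frac F = F := by
  ext n
  rw [HahnSeries.coeff_add]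
  change _ + (if 1 ≤ n then F.coeff n else 0) = _
  rcases lt_or_ge 0 n with hn | hn
  · rw [coeff_emb_of_pos _ hn, if_pos (by omega), zero_add]
  · obtain ⟨m, rfl⟩ : ∃ m : ℕ, n = -(m : ℤ) := ⟨n.natAbs, by omega⟩
    rw [coeff_emb_neg, coeff_polyPart, if_neg (by omega), add_zero]

lemma lnorm_zero : lnorm (0 : LaurentSeries k) = 0 := if_pos rfl

lemma lnorm_of_ne_zero {F : LaurentSeries k} (hF : F ≠ 0) : lnorm F = (2 : ℝ) ^ (-F.order) :=
  if_neg hF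

lemma lnorm_pos {F : LaurentSeries k} (hF : F ≠ 0) : 0 < lnorm F := by
  rw [lnorm_of_ne_zero hF]
  positivity

lemma lnorm_nonneg (F : LaurentSeries k) : 0 ≤ lnorm F := by
  by_cases hF : F = 0
  · rw [hF, lnorm_zero]
  · exact (lnorm_pos hF).le

lemma lnorm_mul (F G : LaurentSeries k) : lnorm (F * G) = lnorm F * lnorm G := by
  by_cases hF : F = 0
  · simp [hF, lnorm_zero]
  by_cases hG : G = 0
  · simp [hG, lnorm_zero]
  rw [lnorm_of_ne_zero hF, lnorm_of_ne_zero hG, lnorm_of_ne_zero (mul_ne_zero hF hG),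
    HahnSeries.order_mul hF hG, ← zpow_add₀ two_ne_zero, neg_add]

lemma lnorm_one : lnorm (1 : LaurentSeries k) = 1 := by
  rw [lnorm_of_ne_zero one_ne_zero]
  simp

lemma lnorm_neg (F : LaurentSeries k) : lnorm (-F) = lnorm F := by
  simp [lnorm, deg, HahnSeries.order_neg]

lemma lnorm_add_le_max (F G : LaurentSeries k) : lnorm (F + G) ≤ max (lnorm F) (lnorm G) := by
  by_cases hF : F = 0
  · simp [hF]
  by_cases hG : G = 0
  · simp [hG]
  by_cases hFG : F + G = 0
  · rw [hFG, lnorm_zero]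
    exact le_max_of_le_left (lnorm_nonneg F)
  rw [lnorm_of_ne_zero hF, lnorm_of_ne_zero hG, lnorm_of_ne_zero hFG, le_max_iff]
  rcases min_le_iff.mp (HahnSeries.min_order_le_order_add hFG) with h | h
  · exact Or.inl (zpow_le_zpow_right₀ one_le_two (neg_le_neg h))
  · exact Or.inr (zpow_le_zpow_right₀ one_le_two (neg_le_neg h))

lemma lnorm_add_eq_left {F G : LaurentSeries k} (h : lnorm G < lnorm F) :
    lnorm (F + G) = lnorm F := by
  apply le_antisymm
  · simpa [max_eq_left h.le] using lnorm_add_le_max F G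
  · have h1 := lnorm_add_le_max (F + G) (-G)
    rw [add_neg_cancel_right, lnorm_neg] at h1
    exact (le_max_iff.mp h1).resolve_right (not_le.mpr h)

lemma lnorm_emb {p : Polynomial k} (hp : p ≠ 0) : lnorm (emb p) = (2 : ℝ) ^ p.natDegree := by
  have hne : emb p ≠ 0 := fun h => hp (emb_eq_zero_iff.mp h)
  suffices (emb p).order = -(p.natDegree : ℤ) by
    rw [lnorm_of_ne_zero hne, this, neg_neg, zpow_natCast]
  apply le_antisymm
  · apply HahnSeries.order_le_of_coeff_ne_zero
    rw [coeff_emb_neg]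
    exact Polynomial.leadingCoeff_ne_zero.mpr hp
  · by_contra! h
    obtain ⟨m, hm⟩ : ∃ m : ℕ, (emb p).order = -(m : ℤ) := ⟨(emb p).order.natAbs, by omega⟩
    have h1 := HahnSeries.coeff_order_eq_zero.not.mpr hne
    rw [hm, coeff_emb_neg] at h1
    exact h1 (Polynomial.coeff_eq_zero_of_natDegree_lt (by omega))

lemma one_le_lnorm_emb {p : Polynomial k} (hp : p ≠ 0) : 1 ≤ lnorm (emb p) := by
  rw [lnorm_emb hp]
  exact one_le_pow₀ one_le_two

lemma eq_zero_of_lnorm_emb_lt_one {p : Polynomial k} (h : lnorm (emb p) < 1) : p = 0 := by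
  by_contra hp
  exact (one_le_lnorm_emb hp).not_gt h

lemma lnorm_frac_lt_one (F : LaurentSeries k) : lnorm (frac F) < 1 := by
  by_cases h : frac F = 0
  · rw [h, lnorm_zero]
    exact one_pos
  rw [lnorm_of_ne_zero h]
  apply zpow_lt_one_of_neg₀ one_lt_two
  have h1 : (if 1 ≤ (frac F).order then F.coeff (frac F).order else 0) ≠ 0 :=
    HahnSeries.coeff_order_eq_zero.not.mpr h
  by_contra h2
  exact h1 (if_neg (by omega))

lemma frac_emb_add (p : Polynomial k) {G : LaurentSeries k} (hG : lnorm G < 1) :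
    frac (emb p + G) = G := by
  have h := emb_polyPart_add_frac (emb p + G)
  have h1 : emb (polyPart (emb p + G) - p) = G + -frac (emb p + G) := by
    rw [emb_sub]
    linear_combination h
  have h2 : lnorm (emb (polyPart (emb p + G) - p)) < 1 := by
    rw [h1]
    refine (lnorm_add_le_max _ _).trans_lt (max_lt hG ?_)
    rw [lnorm_neg]
    exact lnorm_frac_lt_one _
  rw [eq_zero_of_lnorm_emb_lt_one h2, emb_zero] at h1
  linear_combination h1

lemma cfRem_sub_emb_pq (F : LaurentSeries k) (n : ℕ) :
    cfRem F n - emb (pq F n) = frac (cfRem F n) :=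
  sub_eq_of_eq_add' (emb_polyPart_add_frac (cfRem F n)).symm

lemma cfRem_succ (F : LaurentSeries k) (n : ℕ) : cfRem F (n + 1) = (frac (cfRem F n))⁻¹ := by
  rw [← cfRem_sub_emb_pq]
  rfl

lemma frac_ne_zero_of_not_isRat {F : LaurentSeries k} (hF : ¬ IsRat F) : frac F ≠ 0 := by
  intro h
  refine hF ⟨polyPart F, 1, one_ne_zero, ?_⟩
  have h1 := emb_polyPart_add_frac F
  rw [h, add_zero] at h1
  rw [emb_one, mul_one, h1]

lemma not_isRat_inv_frac {F : LaurentSeries k} (hF : ¬ IsRat F) : ¬ IsRat (frac F)⁻¹ := by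
  rintro ⟨p, q, hq, h⟩
  have h0 := frac_ne_zero_of_not_isRat hF
  have h1 : emb q = frac F * emb p := by
    rw [← h, mul_inv_cancel_left₀ h0]
  refine hF ⟨polyPart F * p + q, p, ?_, ?_⟩
  · rintro rfl
    rw [emb_zero, mul_zero] at h1
    exact hq (emb_eq_zero_iff.mp h1)
  · rw [emb_add, emb_mul, h1]
    linear_combination -emb p * emb_polyPart_add_frac F

lemma den_zero (a : ℕ → Polynomial k) : den a 0 = 1 := rfl

lemma det_num_den (a : ℕ → Polynomial k) (n : ℕ) :
    num a (n + 1) * den a n - num a n * den a (n + 1) = (-1) ^ n := by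
  induction n with
  | zero => simp [num, den]; ring
  | succ n ih =>
    simp only [num, den] at ih ⊢
    rw [pow_succ, ← ih]
    ring

lemma isCoprime_den_num (a : ℕ → Polynomial k) (n : ℕ) : IsCoprime (den a n) (num a n) := by
  refine ⟨-(-1) ^ n * num a (n + 1) * -1, (-1) ^ n * -den a (n + 1), ?_⟩
  have h : ((-1 : Polynomial k) ^ n) * (-1) ^ n = 1 := by
    rw [← mul_pow]
    simp
  linear_combination (-1) ^ n * det_num_den a n + h

/-- The error `q_n F - p_n` of the `n`-th convergent of `F`. -/
def convErr (F : LaurentSeries k) (n : ℕ) : LaurentSeries k :=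
  emb (den (pq F) n) * F - emb (num (pq F) n)

lemma convErr_zero (F : LaurentSeries k) : convErr F 0 = frac (cfRem F 0) := by
  rw [← cfRem_sub_emb_pq, convErr, den, num, emb_one, one_mul]
  rfl

lemma not_isRat_cfRem {F : LaurentSeries k} (hF : ¬ IsRat F) (n : ℕ) : ¬ IsRat (cfRem F n) := by
  induction n with
  | zero => exact hF
  | succ n ih =>
    rw [cfRem_succ]
    exact not_isRat_inv_frac ih

lemma frac_cfRem_ne_zero {F : LaurentSeries k} (hF : ¬ IsRat F) (n : ℕ) : frac (cfRem F n) ≠ 0 :=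
  frac_ne_zero_of_not_isRat (not_isRat_cfRem hF n)

lemma frac_cfRem_mul_cfRem_succ {F : LaurentSeries k} (hF : ¬ IsRat F)
    (n : ℕ) : frac (cfRem F n) * cfRem F (n + 1) = 1 := by
  rw [cfRem_succ, mul_inv_cancel₀ (frac_cfRem_ne_zero hF n)]

lemma lnorm_frac_cfRem_mul_lnorm_pq {F : LaurentSeries k} (hF : ¬ IsRat F) (n : ℕ) :
    lnorm (frac (cfRem F n)) * lnorm (emb (pq F (n + 1))) = 1 := by
  have h1 : lnorm (frac (cfRem F n)) * lnorm (cfRem F (n + 1)) = 1 := by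
    rw [← lnorm_mul, frac_cfRem_mul_cfRem_succ hF, lnorm_one]
  have h2 := lnorm_frac_lt_one (cfRem F n)
  have h3 : 1 < lnorm (cfRem F (n + 1)) := by
    by_contra! h
    nlinarith [lnorm_nonneg (frac (cfRem F n))]
  have h4 : emb (pq F (n + 1)) = cfRem F (n + 1) + -frac (cfRem F (n + 1)) := by
    rw [← cfRem_sub_emb_pq]
    ring
  rw [h4, lnorm_add_eq_left, h1]
  rw [lnorm_neg]
  exact (lnorm_frac_lt_one _).trans h3

lemma one_lt_lnorm_pq {F : LaurentSeries k} (hF : ¬ IsRat F)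
    (n : ℕ) : 1 < lnorm (emb (pq F (n + 1))) := by
  have h1 := lnorm_frac_cfRem_mul_lnorm_pq hF n
  have h2 := lnorm_frac_lt_one (cfRem F n)
  by_contra! h
  nlinarith [lnorm_nonneg (frac (cfRem F n))]

lemma pq_succ_ne_zero {F : LaurentSeries k} (hF : ¬ IsRat F) (n : ℕ) : pq F (n + 1) ≠ 0 := by
  intro h
  have h1 := one_lt_lnorm_pq hF n
  rw [h, emb_zero, lnorm_zero] at h1
  linarith

lemma lnorm_den_aux {F : LaurentSeries k} (hF : ¬ IsRat F)
    (n : ℕ) : 0 < lnorm (emb (den (pq F) n)) ∧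
    lnorm (emb (den (pq F) (n + 1))) =
      lnorm (emb (pq F (n + 1))) * lnorm (emb (den (pq F) n)) := by
  induction n with
  | zero =>
    rw [den_zero, emb_one, lnorm_one, mul_one]
    exact ⟨one_pos, rfl⟩
  | succ n ih =>
    obtain ⟨ih0, ih1⟩ := ih
    have h1 := one_lt_lnorm_pq hF n
    have h2 := one_lt_lnorm_pq hF (n + 1)
    have h3 : 0 < lnorm (emb (den (pq F) (n + 1))) := by
      rw [ih1]
      positivity
    refine ⟨h3, ?_⟩
    rw [den, emb_add, lnorm_add_eq_left, emb_mul, lnorm_mul]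
    rw [emb_mul, lnorm_mul]
    nlinarith

lemma lnorm_den_pos {F : LaurentSeries k} (hF : ¬ IsRat F)
    (n : ℕ) : 0 < lnorm (emb (den (pq F) n)) := (lnorm_den_aux hF n).1

lemma lnorm_den_succ {F : LaurentSeries k} (hF : ¬ IsRat F)
    (n : ℕ) : lnorm (emb (den (pq F) (n + 1))) =
    lnorm (emb (pq F (n + 1))) * lnorm (emb (den (pq F) n)) := (lnorm_den_aux hF n).2

lemma lnorm_den_lt_succ {F : LaurentSeries k} (hF : ¬ IsRat F) (n : ℕ) :
    lnorm (emb (den (pq F) n)) < lnorm (emb (den (pq F) (n + 1))) := by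
  rw [lnorm_den_succ hF]
  exact lt_mul_of_one_lt_left (lnorm_den_pos hF n) (one_lt_lnorm_pq hF n)

lemma den_ne_zero {F : LaurentSeries k} (hF : ¬ IsRat F) (n : ℕ) : den (pq F) n ≠ 0 := by
  intro h
  have h1 := lnorm_den_pos hF n
  rw [h, emb_zero, lnorm_zero] at h1
  exact h1.false

lemma natDegree_den_strictMono {F : LaurentSeries k} (hF : ¬ IsRat F)
    : StrictMono fun n => (den (pq F) n).natDegree := by
  refine strictMono_nat_of_lt_succ fun n => ?_
  have h := lnorm_den_lt_succ hF n
  rw [lnorm_emb (den_ne_zero hF n), lnorm_emb (den_ne_zero hF (n + 1))] at h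
  exact (pow_lt_pow_iff_right₀ one_lt_two).mp h

lemma convErr_succ {F : LaurentSeries k} (hF : ¬ IsRat F) (n : ℕ) :
    convErr F (n + 1) = -convErr F n * frac (cfRem F (n + 1)) := by
  induction n with
  | zero =>
    have h1 := frac_cfRem_mul_cfRem_succ hF 0
    have h2 : convErr F 1 = emb (pq F 1) * convErr F 0 - 1 := by
      simp only [convErr, den, num, emb_add, emb_mul, emb_one]
      ring
    rw [zero_add, h2, ← cfRem_sub_emb_pq, convErr_zero]
    linear_combination h1
  | succ n ih =>
    have h1 := frac_cfRem_mul_cfRem_succ hF (n + 1)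
    have h2 : convErr F (n + 2) = emb (pq F (n + 2)) * convErr F (n + 1) + convErr F n := by
      simp only [convErr, den, num, emb_add, emb_mul]
      ring
    rw [h2, ← cfRem_sub_emb_pq F (n + 1 + 1)]
    linear_combination -convErr F n * h1 + cfRem F (n + 2) * ih

lemma lnorm_convErr_mul_lnorm_den {F : LaurentSeries k} (hF : ¬ IsRat F) (n : ℕ) :
    lnorm (convErr F n) * lnorm (emb (den (pq F) (n + 1))) = 1 := by
  induction n with
  | zero =>
    rw [convErr_zero, lnorm_den_succ hF, den_zero, emb_one, lnorm_one, mul_one,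
      lnorm_frac_cfRem_mul_lnorm_pq hF]
  | succ n ih =>
    rw [convErr_succ hF, lnorm_den_succ hF, lnorm_mul, lnorm_neg]
    linear_combination lnorm (convErr F n) * lnorm (emb (den (pq F) (n + 1))) *
      lnorm_frac_cfRem_mul_lnorm_pq hF (n + 1) + ih

lemma lnorm_convErr_lt_one {F : LaurentSeries k} (hF : ¬ IsRat F)
    (n : ℕ) : lnorm (convErr F n) < 1 := by
  have h1 := lnorm_convErr_mul_lnorm_den hF n
  have h2 := lnorm_den_lt_succ hF n
  have h3 := one_le_lnorm_emb (den_ne_zero hF n)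
  by_contra! h
  nlinarith

lemma fnorm_den_mul {F : LaurentSeries k} (hF : ¬ IsRat F)
    (n : ℕ) : fnorm (emb (den (pq F) n) * F) = lnorm (convErr F n) := by
  rw [fnorm, ← frac_emb_add (num (pq F) n) (lnorm_convErr_lt_one hF n), convErr,
    add_sub_cancel]

lemma lnorm_den_mul_fnorm_mul_lnorm_pq {F : LaurentSeries k} (hF : ¬ IsRat F) (n : ℕ) :
    lnorm (emb (den (pq F) n)) * fnorm (emb (den (pq F) n) * F) *
      lnorm (emb (pq F (n + 1))) = 1 := by
  rw [fnorm_den_mul hF, ← lnorm_convErr_mul_lnorm_den hF n, lnorm_den_succ hF]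
  ring

/-- Convergents are best approximations. -/
lemma lnorm_convErr_le_fnorm {F : LaurentSeries k} (hF : ¬ IsRat F)
    (n : ℕ) {q : Polynomial k} (hq : q ≠ 0)
    (h : lnorm (emb q) < lnorm (emb (den (pq F) (n + 1)))) :
    lnorm (convErr F n) ≤ fnorm (emb q * F) := by
  by_contra! hlt
  set p := polyPart (emb q * F)
  have hp : emb p + frac (emb q * F) = emb q * F := emb_polyPart_add_frac _
  have key : emb (q * num (pq F) (n + 1) - p * den (pq F) (n + 1)) =
      emb (den (pq F) (n + 1)) * frac (emb q * F) + -(emb q * convErr F (n + 1)) := by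
    rw [emb_sub, emb_mul, emb_mul, convErr]
    linear_combination -emb (den (pq F) (n + 1)) * hp
  have h1 : lnorm (emb (q * num (pq F) (n + 1) - p * den (pq F) (n + 1))) < 1 := by
    rw [key]
    refine (lnorm_add_le_max _ _).trans_lt (max_lt ?_ ?_)
    · rw [lnorm_mul, ← lnorm_convErr_mul_lnorm_den hF n, mul_comm]
      exact mul_lt_mul_of_pos_right hlt (lnorm_den_pos hF _)
    · rw [lnorm_neg, lnorm_mul]
      have h2 := lnorm_convErr_mul_lnorm_den hF (n + 1)
      have h3 := lnorm_den_lt_succ hF (n + 1)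
      have h4 : 0 < lnorm (convErr F (n + 1)) := by
        by_contra! h5
        nlinarith [lnorm_den_pos hF (n + 1 + 1)]
      nlinarith
  have h2 := sub_eq_zero.mp (eq_zero_of_lnorm_emb_lt_one h1)
  have h3 : den (pq F) (n + 1) ∣ q :=
    (isCoprime_den_num (pq F) (n + 1)).dvd_of_dvd_mul_right ⟨p, by rw [h2, mul_comm]⟩
  have h4 := Polynomial.natDegree_le_of_dvd h3 hq
  rw [lnorm_emb hq, lnorm_emb (den_ne_zero hF _)] at h
  exact h.not_ge (pow_le_pow_right₀ one_le_two h4)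

lemma exists_lnorm_den_le_lt {F : LaurentSeries k} (hF : ¬ IsRat F)
    {q : Polynomial k} (hq : q ≠ 0) :
    ∃ n, lnorm (emb (den (pq F) n)) ≤ lnorm (emb q) ∧
      lnorm (emb q) < lnorm (emb (den (pq F) (n + 1))) := by
  have hex : ∃ n, lnorm (emb q) < lnorm (emb (den (pq F) n)) := by
    refine ⟨q.natDegree + 1, ?_⟩
    rw [lnorm_emb hq, lnorm_emb (den_ne_zero hF _)]
    exact pow_lt_pow_right₀ one_lt_two
      ((Nat.lt_succ_self _).trans_le ((natDegree_den_strictMono hF).id_le (q.natDegree + 1)))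
  obtain ⟨n, hn⟩ : ∃ n, Nat.find hex = n + 1 := by
    refine Nat.exists_eq_succ_of_ne_zero fun h0 => ?_
    have h := Nat.find_spec hex
    rw [h0, den_zero, emb_one, lnorm_one] at h
    exact h.not_ge (one_le_lnorm_emb hq)
  refine ⟨n, not_lt.mp (Nat.find_min hex (by omega)), ?_⟩
  rw [← hn]
  exact Nat.find_spec hex

theorem bad_iff_bounded_partial_quotients {k : Type*} [Field k] (F : LaurentSeries k)
    (hF : ¬ IsRat F) :
    Bad F ↔ ∃ M : ℕ, ∀ n : ℕ, (pq F n).natDegree ≤ M := by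
  constructor
  · rintro ⟨c, hc, h⟩
    obtain ⟨M, hM⟩ := pow_unbounded_of_one_lt c⁻¹ (one_lt_two (α := ℝ))
    refine ⟨max M (pq F 0).natDegree, fun n => ?_⟩
    rcases n with _ | n
    · exact le_max_right _ _
    refine le_max_of_le_left ?_
    have h1 := lnorm_den_mul_fnorm_mul_lnorm_pq hF n
    have h2 := h _ (den_ne_zero hF n)
    have h3 : lnorm (emb (pq F (n + 1))) ≤ c⁻¹ := by
      rw [eq_inv_of_mul_eq_one_right h1]
      exact inv_anti₀ hc h2
    rw [lnorm_emb (pq_succ_ne_zero hF n)] at h3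
    exact ((pow_lt_pow_iff_right₀ one_lt_two).mp (h3.trans_lt hM)).le
  · rintro ⟨M, hM⟩
    refine ⟨((2 : ℝ) ^ M)⁻¹, by positivity, fun q hq => ?_⟩
    obtain ⟨n, hn, hn'⟩ := exists_lnorm_den_le_lt hF hq
    have h1 := lnorm_den_mul_fnorm_mul_lnorm_pq hF n
    have h2 := lnorm_convErr_le_fnorm hF n hq hn'
    rw [← fnorm_den_mul hF] at h2
    have h3 : lnorm (emb (pq F (n + 1))) ≤ 2 ^ M := by
      rw [lnorm_emb (pq_succ_ne_zero hF n)]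
      exact pow_le_pow_right₀ one_le_two (hM _)
    calc ((2 : ℝ) ^ M)⁻¹ ≤ (lnorm (emb (pq F (n + 1))))⁻¹ :=
          inv_anti₀ (one_pos.trans (one_lt_lnorm_pq hF n)) h3
      _ = lnorm (emb (den (pq F) n)) * fnorm (emb (den (pq F) n) * F) :=
          (eq_inv_of_mul_eq_one_left h1).symm
      _ ≤ lnorm (emb q) * fnorm (emb q * F) :=
          mul_le_mul hn h2 (lnorm_nonneg _) (lnorm_nonneg _)

end Littlewood
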